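/- arXiv:2509.04568 — 2 statements merged into one kernel-verified Lean document; each statement's English description precedes it below -/
import Mathlib

section
/- For all integers d, k with 2 ≤ k ≤ d and all n ≥ 1, the number of (d,k)-self-avoiding manifolds of k-area n satisfies c^SAM_{(d,k),n} ≤ C(d,k) · ((2k−1)^{2k−1}/(2k−2)^{2k−2})^n · (2(d−k)+1)^{n−1}, where C(d,k) is the binomial coefficient d choose k. -/
open Filter

/-- A `k`-face of the hypercubic lattice `ℤ^d`: an orientation set `S ⊆ {1,…,d}`
together with a base vertex `v ∈ ℤ^d`. -/
abbrev Face (d : ℕ) := Finset (Fin d) × (Fin d → ℤ)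

/-- The boundary `(k-1)`-edges of a `k`-face `(S, v)`: the `(k-1)`-faces
`(S \ {i}, v)` and `(S \ {i}, v + e_i)` for `i ∈ S`. -/
def faceEdges {d : ℕ} (f : Face d) : Finset (Face d) :=
  f.1.biUnion fun i =>
    {(f.1.erase i, f.2), (f.1.erase i, f.2 + Pi.single i 1)}

/-- Two faces are adjacent if they are distinct and share a common boundary edge. -/
def FaceAdj {d : ℕ} (f g : Face d) : Prop :=
  f ≠ g ∧ ∃ e, e ∈ faceEdges f ∧ e ∈ faceEdges g

/-- A set of faces is connected with respect to adjacency. -/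
def ConnectedFaces {d : ℕ} (M : Finset (Face d)) : Prop :=
  ∀ f ∈ M, ∀ g ∈ M, Relation.ReflTransGen (fun a b => a ∈ M ∧ b ∈ M ∧ FaceAdj a b) f g

/-- A `(d,k)`-self-avoiding manifold of `k`-area `n`: a connected set of `n` `k`-faces
such that every `(k-1)`-edge bounds at most two of its `k`-faces. -/
def IsSAM (d k n : ℕ) (M : Finset (Face d)) : Prop :=
  M.card = n ∧ (∀ f ∈ M, f.1.card = k) ∧ ConnectedFaces M ∧
    ∀ e : Face d, (M.filter fun f => e ∈ faceEdges f).card ≤ 2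

/-- A closed `(d,k)`-self-avoiding manifold: every boundary edge of every face
is shared by exactly two faces. -/
def IsClosedSAM (d k n : ℕ) (M : Finset (Face d)) : Prop :=
  IsSAM d k n M ∧ ∀ f ∈ M, ∀ e ∈ faceEdges f,
    (M.filter fun g => e ∈ faceEdges g).card = 2

/-- A `(d,k)`-fixed polyominoid of `k`-area `n`: a connected set of `n` `k`-faces. -/
def IsXD (d k n : ℕ) (M : Finset (Face d)) : Prop :=
  M.card = n ∧ (∀ f ∈ M, f.1.card = k) ∧ ConnectedFaces M

/-- Translation of a face by a lattice vector. -/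
def translateFace {d : ℕ} (t : Fin d → ℤ) (f : Face d) : Face d := (f.1, f.2 + t)

/-- Two sets of faces are translation-equivalent. -/
def TransEquiv {d : ℕ} (A B : Finset (Face d)) : Prop :=
  ∃ t : Fin d → ℤ, A.image (translateFace t) = B

/-- The number of `(d,k)`-self-avoiding manifolds of `k`-area `n`, up to translation. -/
noncomputable def samCount (d k n : ℕ) : ℕ :=
  Nat.card (Quot fun A B : {M : Finset (Face d) // IsSAM d k n M} =>
    TransEquiv A.val B.val)

/-- The number of closed `(d,k)`-self-avoiding manifolds of `k`-area `n`, up to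
translation. -/
noncomputable def closedSamCount (d k n : ℕ) : ℕ :=
  Nat.card (Quot fun A B : {M : Finset (Face d) // IsClosedSAM d k n M} =>
    TransEquiv A.val B.val)

/-- The number of `(d,k)`-fixed polyominoids of `k`-area `n`, up to translation. -/
noncomputable def xdCount (d k n : ℕ) : ℕ :=
  Nat.card (Quot fun A B : {M : Finset (Face d) // IsXD d k n M} =>
    TransEquiv A.val B.val)

/-!
A manifold is explored from one of its cells by processing a queue of pending boundary edges. A
pending edge either meets no undiscovered cell, or it reveals exactly one, chosen among at most `q`
candidates: since an edge bounds at most two cells, it can be dropped from the queue afterwards.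
A newly revealed cell adds at most `r` further edges, so an exploration of `n` cells processes at
most `r * n + 1` edges, `n - 1` of which reveal a cell. This leaves at most
`(r * n + 1).choose (n - 1) * q ^ (n - 1)` manifolds through a given cell. For `k`-faces of `ℤ^d`
one has `r = 2 * k - 1` and `q = 2 * (d - k) + 1`, and up to translation the starting face is based
at the origin, which leaves `d.choose k` orientations for it. Finally, the binomial expansion of
`((r - 1) + 1) ^ (r * n + 1)` bounds the binomial coefficient by
`(r ^ r / (r - 1) ^ (r - 1)) ^ n`.
-/

open scoped Finset

lemma encard_biUnion_le_mul {ι α : Type*} {s : Set ι} {t : ι → Set α} {q b : ℕ}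
    (hs : s.encard ≤ q) (ht : ∀ i ∈ s, (t i).encard ≤ b) :
    (⋃ i ∈ s, t i).encard ≤ (q * b : ℕ) := by
  lift s to Finset ι using Set.finite_of_encard_le_coe hs
  rw [Set.encard_coe_eq_coe_finsetCard, Nat.cast_le] at hs
  calc (⋃ i ∈ s, t i).encard
      ≤ ∑ i ∈ s, (t i).encard := s.set_encard_biUnion_le t
    _ ≤ ∑ _i ∈ s, (b : ℕ∞) := Finset.sum_le_sum ht
    _ = (#s * b : ℕ) := by simp
    _ ≤ (q * b : ℕ) := by gcongr

lemma choose_mul_pow_mul_pow_le_add_pow {R : Type*} [CommSemiring R] [PartialOrder R]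
    [IsOrderedRing R] {x y : R} (hx : 0 ≤ x) (hy : 0 ≤ y) (a b : ℕ) :
    (a + b).choose b * (x ^ a * y ^ b) ≤ (x + y) ^ (a + b) := by
  calc (a + b).choose b * (x ^ a * y ^ b)
      = x ^ a * y ^ (a + b - a) * (a + b).choose a := by
        rw [Nat.add_sub_cancel_left, Nat.choose_symm_add, mul_comm]
    _ ≤ ∑ j ∈ Finset.range (a + b + 1), x ^ j * y ^ (a + b - j) * (a + b).choose j :=
        Finset.single_le_sum (f := fun j => x ^ j * y ^ (a + b - j) * ((a + b).choose j : R))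
          (fun _ _ => by positivity) (Finset.mem_range.2 (by omega))
    _ = (x + y) ^ (a + b) := (add_pow x y (a + b)).symm

lemma choose_mul_pow_le_pow_of_two_le {c : ℕ} (hc : 2 ≤ c) (m : ℕ) :
    ((c + 1) * (m + 1) + 1).choose m * c ^ (c * (m + 1)) ≤ (c + 1) ^ ((c + 1) * (m + 1)) := by
  have hsum : (c + 1) * (m + 1) + 1 = c * (m + 1) + 2 + m := by ring
  refine Nat.le_of_mul_le_mul_right (c := c ^ 2) ?_ (by positivity)
  calc ((c + 1) * (m + 1) + 1).choose m * c ^ (c * (m + 1)) * c ^ 2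
      = (c * (m + 1) + 2 + m).choose m * (c ^ (c * (m + 1) + 2) * 1 ^ m) := by
        rw [hsum, pow_add, one_pow, mul_one, mul_assoc]
    _ ≤ (c + 1) ^ (c * (m + 1) + 2 + m) :=
        choose_mul_pow_mul_pow_le_add_pow c.zero_le zero_le_one _ _
    _ = (c + 1) ^ ((c + 1) * (m + 1)) * (c + 1) := by rw [← hsum, pow_succ]
    _ ≤ (c + 1) ^ ((c + 1) * (m + 1)) * c ^ 2 := by gcongr; nlinarith

section Exploration

variable {α β : Type*} [DecidableEq β]

/-- The notion of self-avoiding manifold for abstract cells `α` with boundary edges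
`bd : α → Finset β`. -/
structure IsPseudomanifold (bd : α → Finset β) (M : Finset α) : Prop where
  connected : ∀ f ∈ M, ∀ g ∈ M,
    Relation.ReflTransGen (fun a b => a ∈ M ∧ b ∈ M ∧ a ≠ b ∧ ∃ e, e ∈ bd a ∧ e ∈ bd b) f g
  card_filter_le_two : ∀ e, #{f ∈ M | e ∈ bd f} ≤ 2

/-- The state of an exploration of `M`, a pseudomanifold with cells in `K`: the cells in `A` have
been discovered, `m` cells have not, and only the pending edges `Q` may join the two kinds. -/
structure IsExtension (bd : α → Finset β) (K : Set α) (A : Finset α) (Q : Finset β) (m : ℕ)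
    (M : Finset α) : Prop where
  isPseudomanifold : IsPseudomanifold bd M
  mem_cells : ∀ f ∈ M, f ∈ K
  subset : A ⊆ M
  card_eq : #M = #A + m
  mem_of_notMem_pending : ∀ f ∈ A, ∀ e ∈ bd f, e ∉ Q → ∀ g ∈ M, e ∈ bd g → g ∈ A

variable {bd : α → Finset β} {K : Set α} {A M : Finset α} {Q : Finset β} {m q r : ℕ}
  {e : β} {f g h : α}

lemma IsPseudomanifold.eq_or_eq (hM : IsPseudomanifold bd M) (hf : f ∈ M) (hg : g ∈ M)
    (hh : h ∈ M) (hef : e ∈ bd f) (heg : e ∈ bd g) (heh : e ∈ bd h) (hfg : f ≠ g) :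
    h = f ∨ h = g := by
  by_contra! hne
  refine (hM.card_filter_le_two e).not_gt (Finset.two_lt_card.2 ⟨f, ?_, g, ?_, h, ?_, hfg,
    hne.1.symm, hne.2.symm⟩) <;> simp [*]

namespace IsExtension

lemma eq_of_zero (hM : IsExtension bd K A Q 0 M) : M = A :=
  (Finset.eq_of_subset_of_card_le hM.subset hM.card_eq.le).symm

lemma eq_of_pending_empty (hA : A.Nonempty) (hM : IsExtension bd K A ∅ m M) : M = A := by
  obtain ⟨f, hf⟩ := hA
  refine Finset.Subset.antisymm (fun g hg => ?_) hM.subset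
  induction hM.isPseudomanifold.connected f (hM.subset hf) g hg with
  | refl => exact hf
  | tail _ hbc ih =>
    obtain ⟨hb, hc, -, e, heb, hec⟩ := hbc
    exact hM.mem_of_notMem_pending _ (ih hb) e heb (Finset.notMem_empty e) _ hc hec

lemma erase_pending (hM : IsExtension bd K A Q m M)
    (he : ∀ g ∈ M, e ∈ bd g → g ∈ A) : IsExtension bd K A (Q.erase e) m M where
  __ := hM
  mem_of_notMem_pending f hf e' hef he' := by
    obtain rfl | hne := eq_or_ne e' e
    · exact he
    · exact hM.mem_of_notMem_pending f hf e' hef fun h => he' (Finset.mem_erase.2 ⟨hne, h⟩)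

lemma discover [DecidableEq α] (hM : IsExtension bd K A Q (m + 1) M) (hf : f ∈ A)
    (hef : e ∈ bd f) (hg : g ∈ M) (hgA : g ∉ A) (heg : e ∈ bd g) :
    IsExtension bd K (insert g A) (Q.erase e ∪ (bd g).erase e) m M where
  __ := hM
  subset := Finset.insert_subset hg hM.subset
  card_eq := by rw [hM.card_eq, Finset.card_insert_of_notMem hgA]; ring
  mem_of_notMem_pending f' hf' e' hef' he' h hh heh := by
    simp only [Finset.mem_union, Finset.mem_erase, not_or, not_and] at he'
    obtain rfl | hne := eq_or_ne e' e
    · obtain rfl | rfl := hM.isPseudomanifold.eq_or_eq (hM.subset hf) hg hh hef heg heh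
        (ne_of_mem_of_not_mem hf hgA)
      · exact Finset.mem_insert_of_mem hf
      · exact Finset.mem_insert_self _ _
    · obtain rfl | hf'A := Finset.mem_insert.1 hf'
      · exact absurd hef' (he'.2 hne)
      · exact Finset.mem_insert_of_mem
          (hM.mem_of_notMem_pending f' hf'A e' hef' (he'.1 hne) h hh heh)

end IsExtension

lemma setOf_isExtension_succ_subset [DecidableEq α] (hf : f ∈ A) (hef : e ∈ bd f) :
    {M | IsExtension bd K A Q (m + 1) M} ⊆
      {M | IsExtension bd K A (Q.erase e) (m + 1) M} ∪
        ⋃ g ∈ {g ∈ K | e ∈ bd g ∧ g ≠ f},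
          {M | IsExtension bd K (insert g A) (Q.erase e ∪ (bd g).erase e) m M} := by
  intro M hM
  by_cases he : ∀ g ∈ M, e ∈ bd g → g ∈ A
  · exact Or.inl (hM.erase_pending he)
  · push Not at he
    obtain ⟨g, hg, heg, hgA⟩ := he
    exact Or.inr (Set.mem_biUnion ⟨hM.mem_cells g hg, heg, (ne_of_mem_of_not_mem hf hgA).symm⟩
      (hM.discover hf hef hg hgA heg))

lemma encard_isExtension_succ_le [DecidableEq α] {a b : ℕ} (hf : f ∈ A) (hef : e ∈ bd f)
    (hq : {g ∈ K | e ∈ bd g ∧ g ≠ f}.encard ≤ q)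
    (herase : {M | IsExtension bd K A (Q.erase e) (m + 1) M}.encard ≤ a)
    (hdiscover : ∀ g ∈ {g ∈ K | e ∈ bd g ∧ g ≠ f},
      {M | IsExtension bd K (insert g A) (Q.erase e ∪ (bd g).erase e) m M}.encard ≤ b) :
    {M | IsExtension bd K A Q (m + 1) M}.encard ≤ (a + q * b : ℕ) := by
  grw [setOf_isExtension_succ_subset hf hef, Set.encard_union_le, herase,
    encard_biUnion_le_mul hq hdiscover, Nat.cast_add]

lemma card_pending_discover_le (he : e ∈ Q) (heg : e ∈ bd g) (hr : #(bd g) ≤ r + 1) :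
    #(Q.erase e ∪ (bd g).erase e) + 1 ≤ #Q + r := by
  have hunion := Finset.card_union_le (Q.erase e) ((bd g).erase e)
  have hQ := Finset.card_erase_add_one he
  have hbd := Finset.card_erase_add_one heg
  omega

lemma encard_isExtension_zero_le_one : {M | IsExtension bd K A Q 0 M}.encard ≤ 1 :=
  Set.encard_le_one_iff.2 fun _ _ hM hM' => hM.eq_of_zero.trans hM'.eq_of_zero.symm

lemma setOf_isExtension_pending_empty_succ (hA : A.Nonempty) :
    {M | IsExtension bd K A ∅ (m + 1) M} = ∅ := by
  refine Set.eq_empty_of_forall_notMem fun M hM => ?_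
  have hcard := hM.card_eq
  rw [hM.eq_of_pending_empty hA] at hcard
  omega

-- Whether or not the processed edge reveals a cell is matched by the two terms of Pascal's rule.
theorem encard_isExtension_le (hr : ∀ f ∈ K, #(bd f) ≤ r + 1)
    (hq : ∀ f ∈ K, ∀ e ∈ bd f, {g ∈ K | e ∈ bd g ∧ g ≠ f}.encard ≤ q) {N : ℕ}
    (hA : A.Nonempty) (hAK : ∀ f ∈ A, f ∈ K) (hQ : Q ⊆ A.biUnion bd) (hN : #Q + r * m ≤ N) :
    {M | IsExtension bd K A Q m M}.encard ≤ (N.choose m * q ^ m : ℕ) := by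
  classical
  induction N generalizing A Q m with
  | zero =>
    obtain rfl : Q = ∅ := Finset.card_eq_zero.1 (by omega)
    obtain _ | m := m
    · simpa using encard_isExtension_zero_le_one
    · simp [setOf_isExtension_pending_empty_succ hA]
  | succ N ih =>
    obtain _ | m := m
    · simpa using encard_isExtension_zero_le_one
    obtain rfl | ⟨e, he⟩ := Q.eq_empty_or_nonempty
    · simp [setOf_isExtension_pending_empty_succ hA]
    obtain ⟨f, hf, hef⟩ := Finset.mem_biUnion.1 (hQ he)
    have hQe : Q.erase e ⊆ A.biUnion bd := (Q.erase_subset e).trans hQ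
    have herase : {M | IsExtension bd K A (Q.erase e) (m + 1) M}.encard ≤
        (N.choose (m + 1) * q ^ (m + 1) : ℕ) :=
      ih hA hAK hQe (by have := Finset.card_erase_add_one he; omega)
    have hdiscover : ∀ g ∈ {g ∈ K | e ∈ bd g ∧ g ≠ f},
        {M | IsExtension bd K (insert g A) (Q.erase e ∪ (bd g).erase e) m M}.encard ≤
          (N.choose m * q ^ m : ℕ) := by
      rintro g ⟨hgK, heg, -⟩
      refine ih (A.insert_nonempty g) (Finset.forall_mem_insert _ _ _ |>.2 ⟨hgK, hAK⟩) ?_ ?_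
      · rw [Finset.biUnion_insert, Finset.union_comm]
        exact Finset.union_subset_union ((bd g).erase_subset e) hQe
      · linarith [card_pending_discover_le he heg (hr g hgK)]
    calc {M | IsExtension bd K A Q (m + 1) M}.encard
        ≤ (N.choose (m + 1) * q ^ (m + 1) + q * (N.choose m * q ^ m) : ℕ) :=
          encard_isExtension_succ_le hf hef (hq f (hAK f hf) e hef) herase hdiscover
      _ = ((N + 1).choose (m + 1) * q ^ (m + 1) : ℕ) := by
          rw [Nat.choose_succ_succ']
          congr 1
          ring

theorem encard_isPseudomanifold_le (hr : ∀ f ∈ K, #(bd f) ≤ r + 1)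
    (hq : ∀ f ∈ K, ∀ e ∈ bd f, {g ∈ K | e ∈ bd g ∧ g ≠ f}.encard ≤ q) (hf : f ∈ K) (m : ℕ) :
    {M | IsPseudomanifold bd M ∧ (∀ g ∈ M, g ∈ K) ∧ f ∈ M ∧ #M = m + 1}.encard ≤
      ((r * (m + 1) + 1).choose m * q ^ m : ℕ) := by
  have hext : {M | IsPseudomanifold bd M ∧ (∀ g ∈ M, g ∈ K) ∧ f ∈ M ∧ #M = m + 1} ⊆
      {M | IsExtension bd K {f} (bd f) m M} := fun M ⟨hM, hMK, hfM, hcard⟩ =>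
    { isPseudomanifold := hM
      mem_cells := hMK
      subset := Finset.singleton_subset_iff.2 hfM
      card_eq := by rw [hcard, Finset.card_singleton, add_comm]
      mem_of_notMem_pending := fun g hg e heg he =>
        absurd (Finset.mem_singleton.1 hg ▸ heg) he }
  refine (Set.encard_le_encard hext).trans
    (encard_isExtension_le hr hq (Finset.singleton_nonempty f) (by simpa using hf) (by simp) ?_)
  linarith [hr f hf]

end Exploration

section Lattice

variable {d k n : ℕ} {e f : Face d}

lemma mem_faceEdges :
    e ∈ faceEdges f ↔
      ∃ i ∈ f.1, e = (f.1.erase i, f.2) ∨ e = (f.1.erase i, f.2 + Pi.single i 1) := by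
  simp [faceEdges]

/-- The faces of which `e` is a boundary edge, the converse of `faceEdges`. -/
def faceCofaces (e : Face d) : Finset (Face d) :=
  (e.1ᶜ).biUnion fun i => {(insert i e.1, e.2), (insert i e.1, e.2 - Pi.single i 1)}

lemma mem_faceCofaces_of_mem_faceEdges (he : e ∈ faceEdges f) : f ∈ faceCofaces e := by
  obtain ⟨i, hi, rfl | rfl⟩ := mem_faceEdges.1 he <;>
  · simp only [faceCofaces, Finset.mem_biUnion, Finset.mem_insert, Finset.mem_singleton]
    exact ⟨i, by simp, by simp [Finset.insert_erase hi]⟩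

lemma card_faceCofaces_le (e : Face d) : #(faceCofaces e) ≤ (d - #e.1) * 2 :=
  (Finset.card_biUnion_le_card_mul _ _ 2 fun _ _ => Finset.card_le_two).trans
    (by simp [Finset.card_compl])

lemma card_faceEdges_le (f : Face d) : #(faceEdges f) ≤ #f.1 * 2 :=
  Finset.card_biUnion_le_card_mul _ _ 2 fun _ _ => Finset.card_le_two

lemma card_add_one_of_mem_faceEdges (he : e ∈ faceEdges f) : #e.1 + 1 = #f.1 := by
  obtain ⟨i, hi, rfl | rfl⟩ := mem_faceEdges.1 he <;> exact Finset.card_erase_add_one hi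

lemma encard_setOf_mem_faceEdges_ne_le (he : e ∈ faceEdges f) :
    {g | e ∈ faceEdges g ∧ g ≠ f}.encard ≤ (2 * (d - #f.1) + 1 : ℕ) := by
  have hsub : {g | e ∈ faceEdges g ∧ g ≠ f} ⊆ ((faceCofaces e).erase f : Finset (Face d)) :=
    fun g ⟨heg, hgf⟩ => Finset.mem_erase.2 ⟨hgf, mem_faceCofaces_of_mem_faceEdges heg⟩
  refine (Set.encard_le_encard hsub).trans ?_
  rw [Set.encard_coe_eq_coe_finsetCard, Nat.cast_le]
  have herase := Finset.card_erase_add_one (mem_faceCofaces_of_mem_faceEdges he)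
  have hcofaces := card_faceCofaces_le e
  have hdim := card_add_one_of_mem_faceEdges he
  omega

lemma encard_isSAM_mem_le (hf : #f.1 = k) (m : ℕ) :
    {M | IsSAM d k (m + 1) M ∧ f ∈ M}.encard ≤
      (((2 * k - 1) * (m + 1) + 1).choose m * (2 * (d - k) + 1) ^ m : ℕ) := by
  have hsub : {M | IsSAM d k (m + 1) M ∧ f ∈ M} ⊆ {M | IsPseudomanifold faceEdges M ∧
      (∀ g ∈ M, g ∈ {g : Face d | #g.1 = k}) ∧ f ∈ M ∧ #M = m + 1} :=
    fun M ⟨⟨hcard, hdim, hconn, htwo⟩, hfM⟩ => ⟨⟨hconn, htwo⟩, hdim, hfM, hcard⟩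
  refine (Set.encard_le_encard hsub).trans
    (encard_isPseudomanifold_le (K := {g : Face d | #g.1 = k}) ?_ ?_ hf m)
  · rintro g rfl
    have hedges := card_faceEdges_le g
    omega
  · rintro g rfl e he
    exact (Set.encard_le_encard fun h hh => hh.2).trans (encard_setOf_mem_faceEdges_ne_le he)

lemma translateFace_injective (t : Fin d → ℤ) : Function.Injective (translateFace t) :=
  Function.injective_id.prodMap (add_left_injective t)

lemma translateFace_mem_faceEdges_iff (t : Fin d → ℤ) :
    translateFace t e ∈ faceEdges (translateFace t f) ↔ e ∈ faceEdges f := by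
  simp [mem_faceEdges, translateFace, Prod.ext_iff, add_right_comm _ t]

lemma translateFace_translateFace_neg (t : Fin d → ℤ) (f : Face d) :
    translateFace t (translateFace (-t) f) = f := by
  simp [translateFace]

lemma IsSAM.image_translateFace {M : Finset (Face d)} (hM : IsSAM d k n M) (t : Fin d → ℤ) :
    IsSAM d k n (M.image (translateFace t)) := by
  obtain ⟨hcard, hdim, hconn, htwo⟩ := hM
  have hinj := translateFace_injective t
  refine ⟨by rw [Finset.card_image_of_injective _ hinj, hcard], ?_, ?_, fun e => ?_⟩
  · exact Finset.forall_mem_image.2 hdim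
  · refine Finset.forall_mem_image.2 fun f hf => Finset.forall_mem_image.2 fun g hg => ?_
    refine (hconn f hf g hg).lift (translateFace t) ?_
    rintro a b ⟨ha, hb, hab, e, hea, heb⟩
    exact ⟨Finset.mem_image_of_mem _ ha, Finset.mem_image_of_mem _ hb, hinj.ne hab,
      translateFace t e, (translateFace_mem_faceEdges_iff t).2 hea,
      (translateFace_mem_faceEdges_iff t).2 heb⟩
  · rw [← translateFace_translateFace_neg t e, Finset.filter_image,
      Finset.card_image_of_injective _ hinj]
    simpa only [translateFace_mem_faceEdges_iff] using htwo (translateFace (-t) e)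

/-- The translation classes counted by `samCount`. -/
abbrev SAMClass (d k n : ℕ) : Type :=
  Quot fun A B : {M : Finset (Face d) // IsSAM d k n M} => TransEquiv A.val B.val

lemma SAMClass.exists_rep_mem_origin (hn : n ≠ 0) (c : SAMClass d k n) :
    ∃ M : {M : Finset (Face d) // IsSAM d k n M},
      Quot.mk _ M = c ∧ ∃ S : Finset (Fin d), (S, 0) ∈ M.val := by
  obtain ⟨⟨M, hM⟩, rfl⟩ := Quot.exists_rep c
  obtain ⟨⟨S, v⟩, hSv⟩ : M.Nonempty := Finset.card_ne_zero.1 (hM.1 ▸ hn)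
  exact ⟨⟨_, hM.image_translateFace (-v)⟩, (Quot.sound ⟨-v, rfl⟩).symm, S,
    Finset.mem_image.2 ⟨(S, v), hSv, by simp [translateFace]⟩⟩

lemma enatCard_samClass_le_encard (hn : n ≠ 0) :
    ENat.card (SAMClass d k n) ≤
      {M | IsSAM d k n M ∧ ∃ S : Finset (Fin d), (S, 0) ∈ M}.encard := by
  choose rep hrep horigin using SAMClass.exists_rep_mem_origin (d := d) (k := k) hn
  rw [← Set.encard_univ]
  refine Set.encard_le_encard_of_injOn (f := fun c => (rep c).val)
    (fun c _ => ⟨(rep c).2, horigin c⟩) fun a _ b _ hab => ?_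
  rw [← hrep a, ← hrep b, Subtype.ext hab]

-- A bound on `samCount` alone would not show finiteness, as `Nat.card` is `0` on infinite types.
theorem enatCard_samClass_le (d k m : ℕ) :
    ENat.card (SAMClass d k (m + 1)) ≤
      (d.choose k * (((2 * k - 1) * (m + 1) + 1).choose m * (2 * (d - k) + 1) ^ m) : ℕ) := by
  have hsub : {M | IsSAM d k (m + 1) M ∧ ∃ S : Finset (Fin d), (S, 0) ∈ M} ⊆
      ⋃ S ∈ ((Finset.univ.powersetCard k : Finset (Finset (Fin d))) : Set (Finset (Fin d))),
        {M | IsSAM d k (m + 1) M ∧ (S, 0) ∈ M} := by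
    rintro M ⟨hM, S, hS⟩
    exact Set.mem_biUnion (by simpa using hM.2.1 _ hS) ⟨hM, hS⟩
  refine (enatCard_samClass_le_encard m.succ_ne_zero).trans <|
    (Set.encard_le_encard hsub).trans <| encard_biUnion_le_mul ?_ fun S hS => ?_
  · rw [Set.encard_coe_eq_coe_finsetCard, Finset.card_powersetCard, Finset.card_fin]
  · exact encard_isSAM_mem_le (by simpa using hS) m

end Lattice

theorem samCount_upper_bound (d k : ℕ) (hk : 2 ≤ k) (hkd : k ≤ d) (n : ℕ) (hn : 1 ≤ n) :
    (samCount d k n : ℝ) ≤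
      (d.choose k : ℝ) *
        (((2 * k - 1 : ℕ) : ℝ) ^ (2 * k - 1) / ((2 * k - 2 : ℕ) : ℝ) ^ (2 * k - 2)) ^ n *
        ((2 * (d - k) + 1 : ℕ) : ℝ) ^ (n - 1) := by
  obtain ⟨m, rfl⟩ := Nat.exists_eq_add_of_le' hn
  obtain ⟨c, hc, hck⟩ : ∃ c, 2 ≤ c ∧ 2 * k = c + 2 := ⟨2 * k - 2, by omega, by omega⟩
  have hcount : samCount d k (m + 1) ≤
      d.choose k * (((2 * k - 1) * (m + 1) + 1).choose m * (2 * (d - k) + 1) ^ m) :=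
    ENat.toNat_le_of_le_natCast (enatCard_samClass_le d k m)
  have hchoose : ((((2 * k - 1) * (m + 1) + 1).choose m : ℕ) : ℝ) ≤
      (((2 * k - 1 : ℕ) : ℝ) ^ (2 * k - 1) / ((2 * k - 2 : ℕ) : ℝ) ^ (2 * k - 2)) ^ (m + 1) := by
    simp only [hck, Nat.add_sub_cancel, Nat.reduceSubDiff]
    rw [div_pow, ← pow_mul, ← pow_mul, le_div_iff₀ (by positivity)]
    exact_mod_cast choose_mul_pow_le_pow_of_two_le hc m
  calc (samCount d k (m + 1) : ℝ)
      ≤ d.choose k * ((((2 * k - 1) * (m + 1) + 1).choose m : ℕ) *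
          ((2 * (d - k) + 1 : ℕ) : ℝ) ^ m) := by exact_mod_cast hcount
    _ ≤ _ := by rw [Nat.add_sub_cancel, mul_assoc]; gcongr
end

section
/- Let 1 ≤ k ≤ d and let Σ be a finite nonempty set of k-faces of ℤ^d. Let f be the element of Σ whose center coordinates are lexicographically smallest (respectively, largest) among all elements of Σ. If every (k−1)-edge of f is also a (k−1)-edge of some other k-face of Σ (i.e. f is not part of a boundary), then 1 ∉ S(f), i.e. the first coordinate direction is not one of the orientations of f. -/
open Filter

/-- The center coordinates of a face `(S, v)`: `v + (1/2) ∑_{i ∈ S} e_i`,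
viewed in `ℚ^d`. -/
def faceCenter {d : ℕ} (f : Face d) : Fin d → ℚ :=
  fun i => (f.2 i : ℚ) + (if i ∈ f.1 then 1 / 2 else 0)

/-- Strict lexicographic order on coordinate vectors. -/
def LexLt {d : ℕ} (a b : Fin d → ℚ) : Prop :=
  ∃ i : Fin d, (∀ j : Fin d, j < i → a j = b j) ∧ a i < b i

/-! An edge of a face has the center of the face shifted by `±1/2` along one of its orientations,
and a face is determined by its center. Hence if `f` has orientation `i` and another face `g` shares
the edge of `f` on one side in direction `i`, the center of `g` lies strictly beyond that of `f` on
that side: by `1/2` if `g` meets the edge along another direction, by `1` if `g` is a translate of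
`f`. So if all edges of `f` are shared, its center is neither minimal nor maximal in coordinate `i`,
whereas a lexicographically extreme center is extreme in the first coordinate. -/

theorem LexLt.apply_le_of_isMin {d : ℕ} {a b : Fin d → ℚ} (h : LexLt a b) {i : Fin d}
    (hi : IsMin i) : a i ≤ b i :=
  have hlex : toLex a < toLex b := h
  Pi.apply_le_of_toLex hlex.le fun _ hj => absurd hj hi.not_lt

section

variable {d : ℕ} {f g e : Face d} {i : Fin d} {ε : ℤ}

/-- The boundary edge of `f` orthogonal to the direction `i ∈ f.1`, on the lower side for `ε = 0`
and on the upper side for `ε = 1`. Keeping the side as an integer lets both be treated at once. -/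
def sideEdge (f : Face d) (i : Fin d) (ε : ℤ) : Face d :=
  (f.1.erase i, f.2 + Pi.single i ε)

theorem mem_faceEdges_iff :
    e ∈ faceEdges f ↔ ∃ i ∈ f.1, ∃ ε : ℤ, (ε = 0 ∨ ε = 1) ∧ e = sideEdge f i ε := by
  simp [faceEdges, sideEdge]

theorem sideEdge_mem_faceEdges (hi : i ∈ f.1) (hε : ε = 0 ∨ ε = 1) :
    sideEdge f i ε ∈ faceEdges f :=
  mem_faceEdges_iff.2 ⟨i, hi, ε, hε, rfl⟩

theorem faceCenter_sideEdge (hi : i ∈ f.1) (ε : ℤ) :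
    faceCenter (sideEdge f i ε) = faceCenter f + Pi.single i ((ε : ℚ) - 1 / 2) := by
  funext j
  rcases eq_or_ne j i with rfl | hji
  · simp [faceCenter, sideEdge, hi]
  · simp [faceCenter, sideEdge, hji]

theorem floor_faceCenter_apply (f : Face d) (i : Fin d) : ⌊faceCenter f i⌋ = f.2 i := by
  rw [faceCenter, Int.floor_intCast_add]
  split_ifs <;> norm_num

theorem mem_orientation_iff_faceCenter_ne : i ∈ f.1 ↔ faceCenter f i ≠ f.2 i := by
  simp [faceCenter]

theorem faceCenter_injective : Function.Injective (faceCenter (d := d)) := by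
  intro f g h
  have base_eq : f.2 = g.2 := by
    funext i
    rw [← floor_faceCenter_apply f, h, floor_faceCenter_apply]
  refine Prod.ext (Finset.ext fun i => ?_) base_eq
  rw [mem_orientation_iff_faceCenter_ne, mem_orientation_iff_faceCenter_ne, h, base_eq]

theorem faceCenter_apply_of_sideEdge_mem_faceEdges (hi : i ∈ f.1) (hε : ε = 0 ∨ ε = 1)
    (hgf : g ≠ f) (hg : sideEdge f i ε ∈ faceEdges g) :
    faceCenter g i = faceCenter f i + (ε - 1 / 2) ∨
      faceCenter g i = faceCenter f i + 2 * (ε - 1 / 2) := by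
  obtain ⟨j, hj, δ, hδ, hshared⟩ := mem_faceEdges_iff.1 hg
  have hcenter : faceCenter f + Pi.single i ((ε : ℚ) - 1 / 2) =
      faceCenter g + Pi.single j ((δ : ℚ) - 1 / 2) := by
    rw [← faceCenter_sideEdge hi, hshared, faceCenter_sideEdge hj]
  have hcoord := congrFun hcenter i
  rcases eq_or_ne i j with rfl | hij
  · right
    have hδε : δ ≠ ε := by
      rintro rfl
      exact hgf (faceCenter_injective (add_right_cancel hcenter).symm)
    have hopp : δ = 1 - ε := by lia
    simp only [Pi.add_apply, Pi.single_eq_same, hopp, Int.cast_sub, Int.cast_one] at hcoord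
    linarith
  · left
    simpa [hij] using hcoord.symm

theorem lex_extreme_face_not_boundary_first_orientation_general {M : Set (Face d)}
    (hext : (∀ g ∈ M, g ≠ f → faceCenter f i ≤ faceCenter g i) ∨
      (∀ g ∈ M, g ≠ f → faceCenter g i ≤ faceCenter f i))
    (hnotbd : ∀ e ∈ faceEdges f, ∃ g ∈ M, g ≠ f ∧ e ∈ faceEdges g) : i ∉ f.1 := by
  intro hi
  rcases hext with hmin | hmax
  · have hε : (0 : ℤ) = 0 ∨ (0 : ℤ) = 1 := Or.inl rfl
    obtain ⟨g, hgM, hgf, hg⟩ := hnotbd _ (sideEdge_mem_faceEdges hi hε)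
    have hle := hmin g hgM hgf
    rcases faceCenter_apply_of_sideEdge_mem_faceEdges hi hε hgf hg with h | h <;>
      norm_num [h] at hle
  · have hε : (1 : ℤ) = 0 ∨ (1 : ℤ) = 1 := Or.inr rfl
    obtain ⟨g, hgM, hgf, hg⟩ := hnotbd _ (sideEdge_mem_faceEdges hi hε)
    have hle := hmax g hgM hgf
    rcases faceCenter_apply_of_sideEdge_mem_faceEdges hi hε hgf hg with h | h <;>
      norm_num [h] at hle

end

theorem lex_extreme_face_not_boundary_first_orientation
    (d k : ℕ) (hk : 1 ≤ k) (hkd : k ≤ d)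
    (M : Finset (Face d)) (hM : M.Nonempty) (hfaces : ∀ f ∈ M, f.1.card = k)
    (f : Face d) (hf : f ∈ M)
    (hext : (∀ g ∈ M, g ≠ f → LexLt (faceCenter f) (faceCenter g)) ∨
      (∀ g ∈ M, g ≠ f → LexLt (faceCenter g) (faceCenter f)))
    (hnotbd : ∀ e ∈ faceEdges f, ∃ g ∈ M, g ≠ f ∧ e ∈ faceEdges g) :
    (⟨0, by omega⟩ : Fin d) ∉ f.1 := by
  have hfirst : IsMin (⟨0, by omega⟩ : Fin d) := fun j _ => Nat.zero_le j
  exact lex_extreme_face_not_boundary_first_orientation_general (M := M)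
    (hext.imp (fun h g hg hgf => (h g hg hgf).apply_le_of_isMin hfirst)
      fun h g hg hgf => (h g hg hgf).apply_le_of_isMin hfirst) hnotbd
end
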